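/- Let G be a connected graph on ℕ with uniformly bounded degree which is non-singular (the bounded adjacency operator A on ℓ²(ℕ), (A v)_k = ∑_i a_{ki} v_i, has trivial kernel). Let f : ℓ²(ℕ) → ℓ²(ℕ) be a nonzero continuous linear map satisfying f(v ∘ w) = f(v) ⋆ f(w) for all v, w ∈ ℓ²(ℕ), and for each i ∈ ℕ set Ω_i = {k ∈ ℕ : ⟨f(δ_i), δ_k⟩ ≠ 0}. Then the family {Ω_i}_{i∈ℕ} is a partition of ℕ: the sets Ω_i are nonempty, pairwise disjoint, and their union is all of ℕ. -/

import Mathlib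

/-!
Write `Ω i` for the support of `f δ_i`. Everything is read off from the values of `f` on products of
basis vectors.

* For `i ≠ j` the product `δ_i ∘ δ_j` vanishes, so the adjacency operator kills the pointwise
  product of `f δ_i` and `f δ_j`; non-singularity makes it zero, which is disjointness.
* The square `δ_i ∘ δ_i` is the `i`-th column of the source graph divided by `deg i`, and its image
  is `f δ_i ⋆ f δ_i`. If `f δ_i = 0`, the column is in the kernel of `f`. By disjointness no
  cancellation is possible there, so `f δ_k = 0` for every neighbour `k` of `i`; by connectedness
  `f = 0`.
* If `x` lies in no `Ω i`, every value of `f` vanishes at `x`, in particular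
  `(f δ_i ⋆ f δ_i)_x = ∑_j (f δ_i)_j² a_{xj} = 0`. The terms are nonnegative, so no neighbour of `x`
  in the target graph lies in any `Ω i` either; by connectedness `f = 0`.
-/

noncomputable section
open scoped ENNReal

/-- The real Hilbert space ℓ²(ℕ) of square-summable sequences. -/
abbrev l2 : Type := lp (fun _ : ℕ => ℝ) 2

/-- The degree of vertex `i` in the graph with adjacency coefficients `a`. -/
def deg (a : ℕ → ℕ → ℝ) (i : ℕ) : ℝ := ∑' k, a k i

/-- `a` is the adjacency function of a simple graph (0/1-valued, symmetric, no loops). -/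
def SimpleAdj (a : ℕ → ℕ → ℝ) : Prop :=
  (∀ k i, a k i = 0 ∨ a k i = 1) ∧ (∀ k i, a k i = a i k) ∧ (∀ i, a i i = 0)

/-- The graph is connected: any two vertices are joined by a finite path of edges. -/
def Connected (a : ℕ → ℕ → ℝ) : Prop :=
  ∀ i j : ℕ, Relation.ReflTransGen (fun x y => a x y = 1) i j

/-- The graph is locally finite: every degree series converges. -/
def GraphLocallyFinite (a : ℕ → ℕ → ℝ) : Prop := ∀ i, Summable fun k => a k i

/-- The graph has uniformly bounded degree. -/
def UnifBoundedDegree (a : ℕ → ℕ → ℝ) : Prop := ∃ M > 0, ∀ i, deg a i ≤ M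

/-- The graph is regular: all degrees are equal. -/
def GraphRegular (a : ℕ → ℕ → ℝ) : Prop := ∃ d : ℝ, ∀ i, deg a i = d

/-- The graph is biregular: the vertex set splits as `V₁ ⊔ V₂` with every edge joining `V₁`
to `V₂` and constant degrees `d₁` on `V₁` and `d₂` on `V₂`. -/
def GraphBiregular (a : ℕ → ℕ → ℝ) : Prop :=
  ∃ (V₁ : Set ℕ) (d₁ d₂ : ℝ),
    (∀ i ∈ V₁, deg a i = d₁) ∧ (∀ i ∉ V₁, deg a i = d₂) ∧
    ∀ i k, a k i = 1 → ((i ∈ V₁ ∧ k ∉ V₁) ∨ (i ∉ V₁ ∧ k ∈ V₁))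

/-- `p` is the product `v ⋆ w` in the Hilbert evolution algebra `A(G)`:
`p_k = ∑_i v_i w_i a_{ki}` with all series convergent. -/
def IsStarProd (a : ℕ → ℕ → ℝ) (v w p : l2) : Prop :=
  (∀ k, Summable fun i => v i * w i * a k i) ∧
  ∀ k, p k = ∑' i, v i * w i * a k i

/-- `p` is the product `v ∘ w` in the Hilbert evolution algebra `A_RW(G)`:
`p_k = ∑_i v_i w_i a_{ki}/deg(i)` with all series convergent. -/
def IsRWProd (a : ℕ → ℕ → ℝ) (v w p : l2) : Prop :=
  (∀ k, Summable fun i => v i * w i * (a k i / deg a i)) ∧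
  ∀ k, p k = ∑' i, v i * w i * (a k i / deg a i)

/-- The graph is non-singular: the adjacency operator `(A v)_k = ∑_i a_{ki} v_i` on ℓ²(ℕ)
has trivial kernel. -/
def NonSingular (a : ℕ → ℕ → ℝ) : Prop :=
  ∀ v : l2, (∀ k, ∑' i, a k i * v i = 0) → v = 0

/-- The standard orthonormal basis vector `δ_i` of ℓ²(ℕ). -/
def delta (i : ℕ) : l2 := lp.single 2 i (1 : ℝ)

open Function

lemma delta_apply (i j : ℕ) : delta i j = if j = i then 1 else 0 := by
  simp [delta, lp.single_apply, Pi.single_apply]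

lemma delta_mul_delta_of_ne {i j : ℕ} (hij : i ≠ j) (k : ℕ) : delta i k * delta j k = 0 := by
  rcases eq_or_ne k i with rfl | hki
  · simp [delta_apply, hij]
  · simp [delta_apply, hki]

lemma norm_delta (i : ℕ) : ‖delta i‖ = 1 := by
  simp [delta, lp.norm_single]

lemma hasSum_smul_delta (v : l2) : HasSum (fun k => v k • delta k) v := by
  convert lp.hasSum_single (p := 2) (by simp) v using 2 with k
  simp [delta, ← lp.single_smul]

lemma eq_zero_of_map_delta_eq_zero {F : Type*} [AddCommMonoid F] [Module ℝ F]
    [TopologicalSpace F] [T2Space F] {f : l2 →L[ℝ] F} (h : ∀ i, f (delta i) = 0) : f = 0 := by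
  ext v
  exact ((hasSum_smul_delta v).mapL f).unique (by simp [h])

lemma hasSum_apply {ι : Type*} {g : ι → l2} {s : l2} (h : HasSum g s) (m : ℕ) :
    HasSum (fun i => g i m) (s m) :=
  h.mapL (lp.evalCLM ℝ (fun _ : ℕ => ℝ) 2 m)

lemma hasSum_map_apply (f : l2 →L[ℝ] l2) (v : l2) (m : ℕ) :
    HasSum (fun k => v k * f (delta k) m) (f v m) := by
  simpa using hasSum_apply ((hasSum_smul_delta v).mapL f) m

lemma memℓp_of_summable {ι : Type*} {c : ι → ℝ} (hc : Summable c) {p : ℝ≥0∞} (hp : 1 ≤ p) :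
    Memℓp c p := by
  have h1 : Memℓp c 1 := memℓp_gen (by simpa using hc.abs)
  exact h1.of_exponent_ge hp

lemma norm_le_tsum_abs {v : l2} (hv : Summable v) : ‖v‖ ≤ ∑' k, |v k| :=
  (hasSum_smul_delta v).norm_le_of_bounded hv.abs.hasSum fun k => by simp [norm_smul, norm_delta]

lemma summable_mul (v w : l2) : Summable fun k => v k * w k := by
  simpa [mul_comm] using lp.summable_inner (𝕜 := ℝ) v w

/-- The `i`-th column of the matrix `a` as a vector of `ℓ²`, in which it lies because it is
summable. -/
def column {a : ℕ → ℕ → ℝ} (hlf : GraphLocallyFinite a) (i : ℕ) : l2 :=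
  ⟨fun k => a k i, memℓp_of_summable (hlf i) one_le_two⟩

section Column

variable {a : ℕ → ℕ → ℝ}

lemma column_apply (hlf : GraphLocallyFinite a) (i k : ℕ) : column hlf i k = a k i := rfl

lemma norm_column_le (hlf : GraphLocallyFinite a) (hnn : ∀ k i, 0 ≤ a k i) (i : ℕ) :
    ‖column hlf i‖ ≤ deg a i := by
  calc
    ‖column hlf i‖ ≤ ∑' k, |column hlf i k| := norm_le_tsum_abs (hlf i)
    _ = deg a i := by simp only [column_apply, abs_of_nonneg (hnn _ i), deg]

lemma exists_isStarProd (hlf : GraphLocallyFinite a) (hnn : ∀ k i, 0 ≤ a k i)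
    (hubd : UnifBoundedDegree a) (v w : l2) : ∃ q, IsStarProd a v w q := by
  obtain ⟨M, -, hM⟩ := hubd
  have hsum : Summable fun i => (v i * w i) • column hlf i := by
    refine .of_norm_bounded ((summable_mul v w).abs.mul_right M) fun i => ?_
    rw [norm_smul, Real.norm_eq_abs]
    gcongr
    exact (norm_column_le hlf hnn i).trans (hM i)
  have hcoord := hasSum_apply hsum.hasSum
  exact ⟨_, fun k => (hcoord k).summable, fun k => (hcoord k).tsum_eq.symm⟩

lemma mul_eq_zero_of_isStarProd_zero (hns : NonSingular a) {v w : l2}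
    (h : IsStarProd a v w 0) (k : ℕ) : v k * w k = 0 := by
  let u : l2 := ⟨fun k => v k * w k, memℓp_of_summable (summable_mul v w) one_le_two⟩
  have hu : u = 0 := hns u fun k => by
    simpa [u, mul_comm] using (h.2 k).symm
  exact congrArg (fun u : l2 => u k) hu

lemma eq_zero_of_isStarProd_self (hnn : ∀ k i, 0 ≤ a k i) {v q : l2} (hq : IsStarProd a v v q)
    {x n : ℕ} (hqx : q x = 0) (hxn : a x n ≠ 0) : v n = 0 := by
  have hsum : HasSum (fun j => v j * v j * a x j) 0 := by
    simpa only [← hq.2 x, hqx] using (hq.1 x).hasSum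
  rw [hasSum_zero_iff_of_nonneg fun j => mul_nonneg (mul_self_nonneg _) (hnn x j)] at hsum
  simpa [hxn] using congrFun hsum n

lemma isRWProd_delta_of_ne (a : ℕ → ℕ → ℝ) {i j : ℕ} (hij : i ≠ j) :
    IsRWProd a (delta i) (delta j) 0 := by
  constructor <;> simp [delta_mul_delta_of_ne hij, summable_zero]

lemma isRWProd_delta_self (hlf : GraphLocallyFinite a) (i : ℕ) :
    IsRWProd a (delta i) (delta i) ((deg a i)⁻¹ • column hlf i) := by
  have hcoord (k : ℕ) : HasSum (fun j => delta i j * delta i j * (a k j / deg a j))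
      (((deg a i)⁻¹ • column hlf i : l2) k) := by
    convert hasSum_single i fun j hj => ?_ using 1
    · simp [delta_apply, column_apply, div_eq_inv_mul]
    · simp [delta_apply, hj]
  exact ⟨fun k => (hcoord k).summable, fun k => (hcoord k).tsum_eq.symm⟩

end Column

/-- Strong connectedness of the weighted digraph whose edges are the pairs `(x, y)` with
`a x y ≠ 0`. Reversing all edges gives the same notion, so either convention for the direction of
an edge may be used. -/
def IsStronglyConnected (a : ℕ → ℕ → ℝ) : Prop :=
  ∀ i j : ℕ, Relation.ReflTransGen (fun x y => a x y ≠ 0) i j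

lemma Connected.isStronglyConnected {a : ℕ → ℕ → ℝ} (h : Connected a) : IsStronglyConnected a :=
  fun i j => Relation.ReflTransGen.mono (fun _ _ hxy => ne_of_eq_of_ne hxy one_ne_zero) _ _ (h i j)

lemma SimpleAdj.nonneg {a : ℕ → ℕ → ℝ} (h : SimpleAdj a) (k i : ℕ) : 0 ≤ a k i := by
  rcases h.1 k i with h | h <;> simp [h]

lemma IsStronglyConnected.deg_pos {a : ℕ → ℕ → ℝ} (hconn : IsStronglyConnected a)
    (hlf : GraphLocallyFinite a) (hnn : ∀ k i, 0 ≤ a k i) (i : ℕ) : 0 < deg a i := by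
  obtain h | ⟨k, -, hk⟩ := (hconn (i + 1) i).cases_tail
  · omega
  · exact (hlf i).tsum_pos (fun k => hnn k i) k ((hnn k i).lt_of_ne' hk)

/-- Multiplicativity `f (v ∘ w) = f v ⋆ f w` of a map from `A_RW` of the graph `a` to `A` of the
graph `b`, required whenever both products exist in `ℓ²`. -/
def IsEvolutionHom (a b : ℕ → ℕ → ℝ) (f : l2 →L[ℝ] l2) : Prop :=
  ∀ v w p q : l2, IsRWProd a v w p → IsStarProd b (f v) (f w) q → f p = q

lemma map_apply_eq_of_disjoint {f : l2 →L[ℝ] l2}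
    (hdisj : Pairwise (Disjoint on fun i => support (f (delta i)))) (v : l2) {k m : ℕ}
    (hkm : f (delta k) m ≠ 0) : f v m = v k * f (delta k) m := by
  refine (hasSum_map_apply f v m).unique (hasSum_single k fun j hj => ?_)
  have hjm : f (delta j) m = 0 := by
    by_contra h
    exact Set.disjoint_left.mp (hdisj hj) h hkm
  rw [hjm, mul_zero]

namespace IsEvolutionHom

variable {a b : ℕ → ℕ → ℝ} {f : l2 →L[ℝ] l2}

lemma pairwise_disjoint_support (hf : IsEvolutionHom a b f) (hlf : GraphLocallyFinite b)
    (hnn : ∀ k i, 0 ≤ b k i) (hubd : UnifBoundedDegree b) (hns : NonSingular b) :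
    Pairwise (Disjoint on fun i => support (f (delta i))) := by
  intro i j hij
  obtain ⟨q, hq⟩ := exists_isStarProd hlf hnn hubd (f (delta i)) (f (delta j))
  have hq0 : q = 0 := by
    rw [← hf _ _ _ _ (isRWProd_delta_of_ne a hij) hq, map_zero]
  rw [hq0] at hq
  exact Set.disjoint_left.mpr fun m hi hj =>
    mul_ne_zero hi hj (mul_eq_zero_of_isStarProd_zero hns hq m)

lemma map_column_eq_zero (hf : IsEvolutionHom a b f) (hlf : GraphLocallyFinite a) {i : ℕ}
    (hdeg : deg a i ≠ 0) (hi : f (delta i) = 0) : f (column hlf i) = 0 := by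
  have hstar : IsStarProd b (f (delta i)) (f (delta i)) 0 := by
    constructor <;> simp [hi, summable_zero]
  have hzero := hf _ _ _ _ (isRWProd_delta_self hlf i) hstar
  rw [map_smul] at hzero
  exact (smul_eq_zero.mp hzero).resolve_left (inv_ne_zero hdeg)

lemma map_delta_eq_zero_of_adj (hf : IsEvolutionHom a b f) (hlf : GraphLocallyFinite a)
    (hdisj : Pairwise (Disjoint on fun i => support (f (delta i)))) {i k : ℕ}
    (hdeg : deg a i ≠ 0) (hi : f (delta i) = 0) (hki : a k i ≠ 0) : f (delta k) = 0 := by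
  ext m
  by_contra hkm
  have hm := map_apply_eq_of_disjoint hdisj (column hlf i) hkm
  rw [hf.map_column_eq_zero hlf hdeg hi, column_apply] at hm
  exact mul_ne_zero hki hkm hm.symm

lemma support_nonempty (hf : IsEvolutionHom a b f) (hlf : GraphLocallyFinite a)
    (hdeg : ∀ i, deg a i ≠ 0) (hconn : IsStronglyConnected a) (hf0 : f ≠ 0)
    (hdisj : Pairwise (Disjoint on fun i => support (f (delta i)))) (i : ℕ) :
    (support (f (delta i))).Nonempty := by
  rw [support_nonempty_iff]
  intro hi
  refine hf0 (eq_zero_of_map_delta_eq_zero fun j => ?_)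
  induction hconn j i using Relation.ReflTransGen.head_induction_on with
  | refl => exact lp.ext hi
  | head hki _ ih => exact hf.map_delta_eq_zero_of_adj hlf hdisj (hdeg _) ih hki

lemma map_delta_apply_eq_zero_of_adj (hf : IsEvolutionHom a b f) (hlfa : GraphLocallyFinite a)
    (hlfb : GraphLocallyFinite b) (hnn : ∀ k i, 0 ≤ b k i) (hubd : UnifBoundedDegree b)
    {x n : ℕ} (hx : ∀ i, f (delta i) x = 0) (hxn : b x n ≠ 0) (i : ℕ) : f (delta i) n = 0 := by
  have hfx (v : l2) : f v x = 0 :=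
    (hasSum_map_apply f v x).unique (by simp [hx])
  obtain ⟨q, hq⟩ := exists_isStarProd hlfb hnn hubd (f (delta i)) (f (delta i))
  have hqx : q x = 0 := by rw [← hf _ _ _ _ (isRWProd_delta_self hlfa i) hq, hfx]
  exact eq_zero_of_isStarProd_self hnn hq hqx hxn

lemma iUnion_support (hf : IsEvolutionHom a b f) (hlfa : GraphLocallyFinite a)
    (hlfb : GraphLocallyFinite b) (hnn : ∀ k i, 0 ≤ b k i) (hubd : UnifBoundedDegree b)
    (hconn : IsStronglyConnected b) (hf0 : f ≠ 0) :
    ⋃ i, support (f (delta i)) = Set.univ := by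
  refine Set.eq_univ_of_forall fun x => ?_
  by_contra hx
  have hx0 : ∀ i, f (delta i) x = 0 := by simpa using hx
  refine hf0 (eq_zero_of_map_delta_eq_zero fun i => lp.ext (funext fun n => ?_))
  induction hconn x n generalizing i with
  | refl => exact hx0 i
  | tail _ hyn ih => exact hf.map_delta_apply_eq_zero_of_adj hlfa hlfb hnn hubd ih hyn i

end IsEvolutionHom

theorem supports_form_partition_general {a b : ℕ → ℕ → ℝ}
    (hconna : IsStronglyConnected a) (hlfa : GraphLocallyFinite a) (hdeg : ∀ i, deg a i ≠ 0)
    (hconnb : IsStronglyConnected b) (hlfb : GraphLocallyFinite b) (hnn : ∀ k i, 0 ≤ b k i)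
    (hubd : UnifBoundedDegree b) (hns : NonSingular b)
    {f : l2 →L[ℝ] l2} (hf0 : f ≠ 0) (hf : IsEvolutionHom a b f) :
    (∀ i, (support (f (delta i))).Nonempty) ∧
    Pairwise (Disjoint on fun i => support (f (delta i))) ∧
    ⋃ i, support (f (delta i)) = Set.univ := by
  have hdisj := hf.pairwise_disjoint_support hlfb hnn hubd hns
  exact ⟨hf.support_nonempty hlfa hdeg hconna hf0 hdisj, hdisj,
    hf.iUnion_support hlfa hlfb hnn hubd hconnb hf0⟩

/-- for a connected non-singular graph with uniformly bounded degree and a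
nonzero continuous homomorphism `f` of Hilbert evolution algebras from `A_RW(G)` to
`A(G)`, the supports `Ω_i = {k : ⟨f(δ_i), δ_k⟩ ≠ 0}` form a partition of ℕ: they are
nonempty, pairwise disjoint, and cover ℕ. -/
theorem supports_form_partition
    (a : ℕ → ℕ → ℝ)
    (hadj : SimpleAdj a) (hconn : Connected a)
    (hlf : GraphLocallyFinite a) (hubd : UnifBoundedDegree a)
    (hns : NonSingular a)
    (f : l2 →L[ℝ] l2) (hf0 : f ≠ 0)
    (hf : ∀ v w p q : l2, IsRWProd a v w p → IsStarProd a (f v) (f w) q → f p = q) :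
    (∀ i : ℕ, {k : ℕ | f (delta i) k ≠ 0}.Nonempty) ∧
    (∀ i j : ℕ, i ≠ j →
      Disjoint {k : ℕ | f (delta i) k ≠ 0} {k : ℕ | f (delta j) k ≠ 0}) ∧
    (⋃ i : ℕ, {k : ℕ | f (delta i) k ≠ 0}) = Set.univ :=
  have hsc := hconn.isStronglyConnected
  supports_form_partition_general hsc hlf (fun i => (hsc.deg_pos hlf hadj.nonneg i).ne')
    hsc hlf hadj.nonneg hubd hns hf0 hf
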